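/- Structural main result: if there exists a set C* ⊆ X^d_ℓ of size k with φ(P,C*) ≤ Δ, then there exists a set C ⊆ X^d_{2ℓ} of size at most k, consisting of curves from { σ^+(i,j) : 1 ≤ i < j ≤ m }, such that φ(P,C) ≤ 14Δ. -/

import Mathlib

/-!
On curves that are bounded on `[0,1]`, the Fréchet distance is symmetric and satisfies the triangle
inequality. For each center `q` of the given solution, choose one covered index pair `(i,j)` with
`P[t_i,t_j]` within `Δ` of `q`, and replace `q` by `σ⁺(i,j)`. This simplification is defined, since
`q` itself witnesses that `P[t_i,t_j]` has a good approximation with at most `ℓ` vertices. Every other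
subcurve served by `q` is within `Δ + Δ + 4Δ = 6Δ ≤ 14Δ` of `σ⁺(i,j)`, so the same cover works.

Boundedness matters because the supremum of an unbounded family of reals is the junk value `0`.
-/

open Set

noncomputable section

/-- Points in `ℝ^d`. -/
abbrev Pt (d : ℕ) : Type := EuclideanSpace ℝ (Fin d)

/-- A reparametrization: a continuous strictly increasing bijection of `[0,1]` onto itself. -/
def IsReparam (γ : ℝ → ℝ) : Prop :=
  ContinuousOn γ (Icc 0 1) ∧ StrictMonoOn γ (Icc 0 1) ∧ γ '' Icc 0 1 = Icc 0 1

/-- The Fréchet distance `d_F(P,Q) = inf_γ sup_{t ∈ [0,1]} ‖P(γ(t)) - Q(t)‖`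
(only the values of the curves on `[0,1]` are relevant). -/
def frechetDist {d : ℕ} (P Q : ℝ → Pt d) : ℝ :=
  ⨅ γ : {γ : ℝ → ℝ // IsReparam γ}, ⨆ s : Icc (0:ℝ) 1, ‖P (γ.1 s.1) - Q s.1‖

/-- The linearly parametrized line segment from `a` to `b`. -/
def seg {d : ℕ} (a b : Pt d) : ℝ → Pt d := fun s => (1 - s) • a + s • b

/-- The subcurve `P[a,b]` of `P`, linearly reparametrized over `[0,1]`. -/
def subcurve {d : ℕ} (P : ℝ → Pt d) (a b : ℝ) : ℝ → Pt d := fun s => P (a + s * (b - a))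

/-- The polygonal curve with vertex sequence `pts 0, …, pts n`, uniformly
parametrized over `[0,1]`. -/
def polyline {d n : ℕ} (pts : Fin (n + 1) → Pt d) : ℝ → Pt d := fun s =>
  if h : n = 0 then pts 0
  else
    let i : ℕ := min ⌊s * n⌋₊ (n - 1)
    have hi : i < n := lt_of_le_of_lt (min_le_right _ _) (by omega)
    (1 - (s * n - i)) • pts ⟨i, hi.trans n.lt_succ_self⟩ +
      (s * n - i) • pts ⟨i + 1, Nat.succ_lt_succ hi⟩

/-- `f ∈ 𝕏^d_ℓ`: `f` is a polygonal curve with at most `ℓ` vertices. -/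
def IsPolygonal {d : ℕ} (f : ℝ → Pt d) (ℓ : ℕ) : Prop :=
  ∃ n : ℕ, n + 1 ≤ ℓ ∧ ∃ pts : Fin (n + 1) → Pt d, f = polyline pts

/-- Concatenation of two curves (each parametrized over `[0,1]`). -/
def concat {d : ℕ} (f g : ℝ → Pt d) : ℝ → Pt d := fun s =>
  if s ≤ 1 / 2 then f (2 * s) else g (2 * s - 1)

/-- `CostLE P m t C Δ` states that the clustering cost satisfies `φ(P,C) ≤ Δ`:
there is a family `I` of index pairs `(i,j)`, `1 ≤ i < j ≤ m`, with
`⋃_{(i,j) ∈ I} [t i, t j] = [0,1]`, such that every corresponding subcurve is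
within Fréchet distance `Δ` of some center in `C`. -/
def CostLE {d : ℕ} (P : ℝ → Pt d) (m : ℕ) (t : ℕ → ℝ) (C : Set (ℝ → Pt d)) (Δ : ℝ) : Prop :=
  ∃ I : Set (ℕ × ℕ),
    (∀ q ∈ I, 1 ≤ q.1 ∧ q.1 < q.2 ∧ q.2 ≤ m) ∧
    (⋃ q ∈ I, Icc (t q.1) (t q.2)) = Icc (0:ℝ) 1 ∧
    ∀ q ∈ I, ∃ c ∈ C, frechetDist (subcurve P (t q.1) (t q.2)) c ≤ Δ

/-- The set `r_Q` of the set system `R` (ground set `{1,…,m−1}`):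
`r_Q = {z : ∃ i ≤ z < j, d_F(Q, P[t_i,t_j]) ≤ Δ}`. -/
def rSet {d : ℕ} (P : ℝ → Pt d) (m : ℕ) (t : ℕ → ℝ) (Δ : ℝ) (Q : ℝ → Pt d) : Set ℕ :=
  {z | 1 ≤ z ∧ z < m ∧ ∃ i j, 1 ≤ i ∧ i ≤ z ∧ z < j ∧ j ≤ m ∧
    frechetDist Q (subcurve P (t i) (t j)) ≤ Δ}

/-- The proxy curve `κ_z(x,y) = σ⁻(x,z) ⊕ σ∘(z,z+1) ⊕ σ⁺(z+1,y)`. -/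
def kappa {d : ℕ} (σm : ℕ → ℕ → ℝ → Pt d) (σo : ℕ → ℝ → Pt d)
    (σp : ℕ → ℕ → ℝ → Pt d) (z x y : ℕ) : ℝ → Pt d :=
  concat (σm x z) (concat (σo z) (σp (z + 1) y))

/-- The set `r_{i,j}` of the set system `R̃₃`. -/
def rTilde3 {d : ℕ} (P : ℝ → Pt d) (m : ℕ) (t : ℕ → ℝ) (Δ : ℝ)
    (σm : ℕ → ℕ → ℝ → Pt d) (σo : ℕ → ℝ → Pt d) (σp : ℕ → ℕ → ℝ → Pt d)
    (xz ynext : ℕ → ℕ) (i j : ℕ) : Set ℕ :=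
  {z | 1 ≤ z ∧ z < m ∧ ∃ x y, xz z ≤ x ∧ x ≤ z ∧ z + 1 ≤ y ∧ y ≤ ynext z ∧
    frechetDist (kappa σm σo σp z x y) (σp i j) ≤ 10 * Δ}

/-- `f` is bounded in norm on `[0,1]`. -/
def BddCurve {d : ℕ} (f : ℝ → Pt d) : Prop := ∃ B, ∀ s ∈ Icc (0:ℝ) 1, ‖f s‖ ≤ B

lemma IsReparam.mapsTo {γ : ℝ → ℝ} (h : IsReparam γ) {s : ℝ} (hs : s ∈ Icc (0:ℝ) 1) :
    γ s ∈ Icc (0:ℝ) 1 := h.2.2 ▸ mem_image_of_mem γ hs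

lemma IsReparam.id : IsReparam (fun s => s) :=
  ⟨continuousOn_id, strictMonoOn_id, by simp⟩

lemma IsReparam.comp {γ δ : ℝ → ℝ} (hγ : IsReparam γ) (hδ : IsReparam δ) :
    IsReparam (fun s => γ (δ s)) :=
  ⟨hγ.1.comp hδ.1 fun _ hs => hδ.mapsTo hs,
    fun _ hx _ hy hxy => hγ.2.1 (hδ.mapsTo hx) (hδ.mapsTo hy) (hδ.2.1 hx hy hxy), by
    rw [← image_image γ δ, hδ.2.2, hγ.2.2]⟩

lemma IsReparam.exists_inv {γ : ℝ → ℝ} (hγ : IsReparam γ) :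
    ∃ δ, IsReparam δ ∧ ∀ s ∈ Icc (0:ℝ) 1, γ (δ s) = s := by
  have hsurj : ∀ s ∈ Icc (0:ℝ) 1, ∃ x ∈ Icc (0:ℝ) 1, γ x = s := fun s hs => by
    rw [← hγ.2.2] at hs; exact hs
  choose! δ hδ hγδ using hsurj
  have hmono : StrictMonoOn δ (Icc 0 1) := fun x hx y hy hxy => by
    rw [← hγ.2.1.lt_iff_lt (hδ x hx) (hδ y hy), hγδ x hx, hγδ y hy]; exact hxy
  have himg : δ '' Icc 0 1 = Icc 0 1 := by
    apply Subset.antisymm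
    · rintro _ ⟨s, hs, rfl⟩; exact hδ s hs
    · intro x hx
      exact ⟨γ x, hγ.mapsTo hx, hγ.2.1.injOn (hδ _ (hγ.mapsTo hx)) hx (hγδ _ (hγ.mapsTo hx))⟩
  refine ⟨δ, ⟨?_, hmono, himg⟩, hγδ⟩
  -- A strictly monotone map onto an interval is an order isomorphism, hence continuous.
  have : OrdConnected (δ '' Icc 0 1) := by rw [himg]; exact ordConnected_Icc
  rw [continuousOn_iff_continuous_domRestrict]
  exact continuous_subtype_val.comp (hmono.orderIso δ (Icc 0 1)).continuous

/-- A matching of width `r` bounds the Fréchet distance by `r`. -/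
lemma frechetDist_le_of_reparam {d : ℕ} {f g : ℝ → Pt d} {r : ℝ} {γ : ℝ → ℝ} (hγ : IsReparam γ)
    (h : ∀ s ∈ Icc (0:ℝ) 1, ‖f (γ s) - g s‖ ≤ r) : frechetDist f g ≤ r := by
  have : Nonempty (Icc (0:ℝ) 1) := ⟨⟨0, by simp⟩⟩
  have hbdd : BddBelow (range fun γ : {γ : ℝ → ℝ // IsReparam γ} =>
      ⨆ s : Icc (0:ℝ) 1, ‖f (γ.1 s.1) - g s.1‖) := by
    refine ⟨0, ?_⟩
    rintro _ ⟨γ, rfl⟩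
    exact Real.iSup_nonneg fun _ => norm_nonneg _
  have hsup : ⨆ s : Icc (0:ℝ) 1, ‖f (γ s.1) - g s.1‖ ≤ r := ciSup_le fun s => h s.1 s.2
  exact (ciInf_le hbdd ⟨γ, hγ⟩).trans hsup

/-- The infimum need not be attained, so a matching is only available with slack. -/
lemma exists_reparam_of_frechetDist_lt {d : ℕ} {f g : ℝ → Pt d} (hf : BddCurve f)
    (hg : BddCurve g) {r : ℝ} (h : frechetDist f g < r) :
    ∃ γ, IsReparam γ ∧ ∀ s ∈ Icc (0:ℝ) 1, ‖f (γ s) - g s‖ ≤ r := by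
  have : Nonempty {γ : ℝ → ℝ // IsReparam γ} := ⟨⟨_, IsReparam.id⟩⟩
  obtain ⟨⟨γ, hγ⟩, hlt⟩ := exists_lt_of_ciInf_lt h
  obtain ⟨A, hA⟩ := hf
  obtain ⟨B, hB⟩ := hg
  refine ⟨γ, hγ, fun s hs => le_trans ?_ hlt.le⟩
  refine le_ciSup (f := fun s : Icc (0:ℝ) 1 => ‖f (γ s.1) - g s.1‖) ⟨A + B, ?_⟩ ⟨s, hs⟩
  rintro _ ⟨u, rfl⟩
  exact (norm_sub_le _ _).trans (add_le_add (hA _ (hγ.mapsTo u.2)) (hB _ u.2))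

lemma frechetDist_comm_le {d : ℕ} {f g : ℝ → Pt d} (hf : BddCurve f) (hg : BddCurve g) :
    frechetDist g f ≤ frechetDist f g := by
  refine le_of_forall_gt_imp_ge_of_dense fun r hr => ?_
  obtain ⟨γ, hγ, h⟩ := exists_reparam_of_frechetDist_lt hf hg hr
  obtain ⟨δ, hδ, hγδ⟩ := hγ.exists_inv
  refine frechetDist_le_of_reparam hδ fun s hs => ?_
  have := h _ (hδ.mapsTo hs)
  rwa [hγδ s hs, norm_sub_rev] at this

lemma frechetDist_triangle {d : ℕ} {f g h : ℝ → Pt d} (hf : BddCurve f) (hg : BddCurve g)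
    (hh : BddCurve h) : frechetDist f h ≤ frechetDist f g + frechetDist g h := by
  refine le_of_forall_pos_le_add fun ε hε => ?_
  obtain ⟨γ, hγ, h1⟩ := exists_reparam_of_frechetDist_lt hf hg
    (lt_add_of_pos_right (frechetDist f g) (half_pos hε))
  obtain ⟨δ, hδ, h2⟩ := exists_reparam_of_frechetDist_lt hg hh
    (lt_add_of_pos_right (frechetDist g h) (half_pos hε))
  refine frechetDist_le_of_reparam (hγ.comp hδ) fun s hs => ?_
  have h3 := norm_sub_le_norm_sub_add_norm_sub (f (γ (δ s))) (g (δ s)) (h s)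
  linarith [h1 _ (hδ.mapsTo hs), h2 s hs]

lemma IsPolygonal.bddCurve {d ℓ : ℕ} {f : ℝ → Pt d} (hf : IsPolygonal f ℓ) : BddCurve f := by
  obtain ⟨n, -, pts, rfl⟩ := hf
  have hle : ∀ i, ‖pts i‖ ≤ ∑ i, ‖pts i‖ := fun i =>
    Finset.single_le_sum (f := fun i => ‖pts i‖) (fun _ _ => norm_nonneg _) (Finset.mem_univ i)
  refine ⟨∑ i, ‖pts i‖, fun s hs => ?_⟩
  unfold polyline
  split_ifs with h
  · exact hle _
  · have hn : 1 ≤ n := Nat.one_le_iff_ne_zero.2 h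
    have hsn : 0 ≤ s * n := mul_nonneg hs.1 n.cast_nonneg
    have h0 : ((min ⌊s * n⌋₊ (n - 1) : ℕ) : ℝ) ≤ s * n :=
      (Nat.cast_le.2 (min_le_left _ _)).trans (Nat.floor_le hsn)
    have h1 : s * n ≤ ((min ⌊s * n⌋₊ (n - 1) : ℕ) : ℝ) + 1 := by
      rcases min_choice ⌊s * n⌋₊ (n - 1) with e | e <;> rw [e]
      · exact (Nat.lt_floor_add_one _).le
      · rw [Nat.cast_sub hn]
        have : s * n ≤ n := mul_le_of_le_one_left n.cast_nonneg hs.2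
        push_cast
        linarith
    -- A point of an edge is a convex combination of two vertices.
    have key := (convex_closedBall (0 : Pt d) (∑ i, ‖pts i‖))
      (mem_closedBall_zero_iff.2 (hle ⟨min ⌊s * n⌋₊ (n - 1), by omega⟩))
      (mem_closedBall_zero_iff.2 (hle ⟨min ⌊s * n⌋₊ (n - 1) + 1, by omega⟩))
      (sub_nonneg.2 (sub_le_iff_le_add'.2 h1)) (sub_nonneg.2 h0) (sub_add_cancel _ _)
    exact mem_closedBall_zero_iff.1 key

lemma bddCurve_subcurve {d : ℕ} {P : ℝ → Pt d} (hP : ContinuousOn P (Icc 0 1)) {a b : ℝ}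
    (ha : 0 ≤ a) (hab : a ≤ b) (hb : b ≤ 1) : BddCurve (subcurve P a b) := by
  obtain ⟨B, hB⟩ := isCompact_Icc.exists_bound_of_continuousOn hP
  exact ⟨B, fun s hs => hB _ ⟨by nlinarith [hs.1], by nlinarith [hs.2]⟩⟩

/-- Structural main result: if there is `C* ⊆ 𝕏^d_ℓ` of size `k` with
`φ(P,C*) ≤ Δ`, then there is `C ⊆ 𝕏^d_{2ℓ}` of size at most `k`, consisting of curves
`σ⁺(i,j)`, `1 ≤ i < j ≤ m`, with `φ(P,C) ≤ 14Δ`. -/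
theorem stmt14 {d ℓ : ℕ} (P : ℝ → Pt d) (hP : ContinuousOn P (Icc 0 1))
    (m : ℕ) (hm : 2 ≤ m) (t : ℕ → ℝ) (ht0 : t 1 = 0) (ht1 : t m = 1)
    (htmono : ∀ i, 1 ≤ i → i < m → t i < t (i + 1))
    (Δ : ℝ) (hΔ : 0 < Δ)
    (Dm Dp : ℕ → ℕ → Prop) (Do : ℕ → Prop)
    (σm σp : ℕ → ℕ → ℝ → Pt d) (σo : ℕ → ℝ → Pt d)
    (hσm : ∀ x z, 1 ≤ x → x ≤ z → z ≤ m → Dm x z →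
      IsPolygonal (σm x z) (2 * ℓ) ∧
      frechetDist (σm x z) (subcurve P (t x) (t z)) ≤ 4 * Δ ∧ σm x z 1 = P (t z))
    (hσmBot : ∀ x z, 1 ≤ x → x ≤ z → z ≤ m → ¬ Dm x z →
      ¬ ∃ Q, IsPolygonal Q ℓ ∧ frechetDist Q (subcurve P (t x) (t z)) ≤ Δ)
    (hσmMono : ∀ x x' z, x ≤ x' → x' ≤ z → Dm x z → Dm x' z)
    (hσo : ∀ z, 1 ≤ z → z + 1 ≤ m → Do z →
      IsPolygonal (σo z) (2 * ℓ) ∧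
      frechetDist (σo z) (subcurve P (t z) (t (z+1))) ≤ 4 * Δ ∧
      σo z 0 = P (t z) ∧ σo z 1 = P (t (z+1)))
    (hσoBot : ∀ z, 1 ≤ z → z + 1 ≤ m → ¬ Do z →
      ¬ ∃ Q, IsPolygonal Q ℓ ∧ frechetDist Q (subcurve P (t z) (t (z+1))) ≤ Δ)
    (hσp : ∀ i j, 1 ≤ i → i ≤ j → j ≤ m → Dp i j →
      IsPolygonal (σp i j) (2 * ℓ) ∧
      frechetDist (σp i j) (subcurve P (t i) (t j)) ≤ 4 * Δ ∧ σp i j 0 = P (t i))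
    (hσpBot : ∀ i j, 1 ≤ i → i ≤ j → j ≤ m → ¬ Dp i j →
      ¬ ∃ Q, IsPolygonal Q ℓ ∧ frechetDist Q (subcurve P (t i) (t j)) ≤ Δ)
    (hσpMono : ∀ i j j', i ≤ j' → j' ≤ j → Dp i j → Dp i j')
    (xz ynext : ℕ → ℕ)
    (hxz : ∀ z, 1 ≤ z → z < m →
      IsLeast {x | 1 ≤ x ∧ x ≤ z ∧ ∀ x', x ≤ x' → x' ≤ z → Dm x' z} (xz z))
    (hynext : ∀ z, 1 ≤ z → z < m →
      IsGreatest {y | z + 1 ≤ y ∧ y ≤ m ∧ ∀ y', z + 1 ≤ y' → y' ≤ y → Dp (z+1) y'}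
        (ynext z))
    (k : ℕ) (Cstar : Fin k → ℝ → Pt d)
    (hCpoly : ∀ s, IsPolygonal (Cstar s) ℓ)
    (hCcost : CostLE P m t {f | ∃ s, f = Cstar s} Δ) :
    ∃ ij : Fin k → ℕ × ℕ,
      (∀ s, 1 ≤ (ij s).1 ∧ (ij s).1 < (ij s).2 ∧ (ij s).2 ≤ m) ∧
      (∀ s, IsPolygonal (σp (ij s).1 (ij s).2) (2 * ℓ)) ∧
      CostLE P m t {f | ∃ s, f = σp (ij s).1 (ij s).2} (14 * Δ) := by
  obtain ⟨I, hI, hcov, hclose⟩ := hCcost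
  have tmono : ∀ i j, 1 ≤ i → i ≤ j → j ≤ m → t i ≤ t j := by
    intro i j hi hij
    induction j, hij using Nat.le_induction with
    | base => exact fun _ => le_rfl
    | succ j hij ih => exact fun hj => (ih (by omega)).trans (htmono j (by omega) (by omega)).le
  have hbdd : ∀ q ∈ I, BddCurve (subcurve P (t q.1) (t q.2)) := fun q hq => by
    obtain ⟨h1, h2, h3⟩ := hI q hq
    exact bddCurve_subcurve hP (ht0 ▸ tmono 1 q.1 le_rfl h1 (by omega))
      (tmono _ _ h1 h2.le h3) (ht1 ▸ tmono q.2 m (by omega) h3 le_rfl)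
  have hDp : ∀ q ∈ I, Dp q.1 q.2 := fun q hq => by
    by_contra hD
    obtain ⟨h1, h2, h3⟩ := hI q hq
    obtain ⟨_, ⟨s, rfl⟩, hs⟩ := hclose q hq
    exact hσpBot q.1 q.2 h1 h2.le h3 hD ⟨Cstar s, hCpoly s,
      (frechetDist_comm_le (hbdd q hq) (hCpoly s).bddCurve).trans hs⟩
  have hσ := fun q (hq : q ∈ I) =>
    hσp q.1 q.2 (hI q hq).1 (hI q hq).2.1.le (hI q hq).2.2 (hDp q hq)
  -- A center that serves no subcurve still needs some admissible pair, hence the nonemptiness of `I`.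
  obtain ⟨q₀, hq₀⟩ : I.Nonempty := by
    have h0 : (0:ℝ) ∈ ⋃ q ∈ I, Icc (t q.1) (t q.2) := by rw [hcov]; simp
    simp only [mem_iUnion] at h0
    obtain ⟨q, hq, -⟩ := h0
    exact ⟨q, hq⟩
  have hchoice : ∀ s, ∃ p ∈ I, ∀ q ∈ I,
      frechetDist (subcurve P (t q.1) (t q.2)) (Cstar s) ≤ Δ →
      frechetDist (subcurve P (t p.1) (t p.2)) (Cstar s) ≤ Δ := fun s => by
    by_cases h : ∃ q ∈ I, frechetDist (subcurve P (t q.1) (t q.2)) (Cstar s) ≤ Δ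
    · obtain ⟨p, hp, hps⟩ := h
      exact ⟨p, hp, fun _ _ _ => hps⟩
    · exact ⟨q₀, hq₀, fun q hq hqs => (h ⟨q, hq, hqs⟩).elim⟩
  choose ij hij hserve using hchoice
  refine ⟨ij, fun s => hI _ (hij s), fun s => (hσ _ (hij s)).1, I, hI, hcov, fun q hq => ?_⟩
  obtain ⟨_, ⟨s, rfl⟩, hs⟩ := hclose q hq
  refine ⟨_, ⟨s, rfl⟩, ?_⟩
  have hbC := (hCpoly s).bddCurve
  have hbp := hbdd _ (hij s)
  have hbσ := (hσ _ (hij s)).1.bddCurve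
  have h1 := frechetDist_triangle (hbdd q hq) hbC hbσ
  have h2 := frechetDist_triangle hbC hbp hbσ
  have h3 := (frechetDist_comm_le hbp hbC).trans (hserve s q hq hs)
  have h4 := (frechetDist_comm_le hbσ hbp).trans (hσ _ (hij s)).2.1
  linarith
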